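/- Let r ≥ 1 and let i, j, k, l, m be integers with 1 ≤ j ≤ i ≤ r, 0 ≤ l ≤ r-1, m ≥ 0, 1 ≤ k ≤ mr+l, k + i < r + j, and i ≤ l + j ≤ k + i - 1. Then in ℚ(x_1,…,x_r) one has X(i,k) · X(j, mr+l) = X(j, mr+k+i-j) · X(i, l+j-i) + X(j, mr+i-j-1) · X(l+j+1, k+i-l-j-1). -/

import Mathlib

/-- The ambient field `ℚ(x_1, …, x_r)`, realized as the fraction field of the
polynomial ring over `ℚ` in variables indexed by `ZMod r` (so indices are
automatically read modulo `r`). -/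
noncomputable abbrev CyclicField (r : ℕ) : Type :=
  FractionRing (MvPolynomial (ZMod r) ℚ)

/-- The variable `x_i` for `i : ℤ`, with `x_{i+r} = x_i`. -/
noncomputable def xv (r : ℕ) (i : ℤ) : CyclicField r :=
  algebraMap (MvPolynomial (ZMod r) ℚ) (CyclicField r) (MvPolynomial.X (i : ZMod r))

/-- The generalized cluster variable `X(l, n)` (the image of the indecomposable
nilpotent representation `E_l[n]` under the Caldero–Chapoton map):
`X(l,0) = 1` and, for `n ≥ 1`,
`X(l,n) = x_{l+n}/x_l + Σ_{k=1}^{n-1} (x_{l+n}·x_{l+r-1})/(x_{l+k-1}·x_{l+k}) + x_{l+r-1}/x_{l+n-1}`. -/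
noncomputable def Xgcv (r : ℕ) (l : ℤ) : ℕ → CyclicField r
  | 0 => 1
  | n + 1 =>
      xv r (l + n + 1) / xv r l
        + ∑ k ∈ Finset.Icc 1 n,
            (xv r (l + n + 1) * xv r (l + r - 1)) / (xv r (l + k - 1) * xv r (l + k))
        + xv r (l + r - 1) / xv r (l + n)


lemma xv_ne (r : ℕ) (i : ℤ) : xv r i ≠ 0 := by
  unfold xv
  intro h
  have h2 := (map_eq_zero_iff _ (IsFractionRing.injective (MvPolynomial (ZMod r) ℚ)
    (CyclicField r))).1 h
  exact MvPolynomial.X_ne_zero _ h2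

lemma xv_congr (r : ℕ) (i j m : ℤ) (h : i = j + m * r) : xv r i = xv r j := by
  unfold xv
  have : (i : ZMod r) = (j : ZMod r) := by rw [h]; push_cast; simp
  rw [this]

/-- Potential. -/
noncomputable def pot (r : ℕ) (t : ℤ) : CyclicField r :=
  ∑ s ∈ Finset.range t.toNat, 1 / (xv r (s : ℤ) * xv r ((s : ℤ) + 1))

lemma pot_succ (r : ℕ) (t : ℤ) (ht : 0 ≤ t) :
    pot r (t + 1) = pot r t + 1 / (xv r t * xv r (t + 1)) := by
  obtain ⟨n, rfl⟩ := Int.eq_ofNat_of_zero_le ht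
  unfold pot
  have h1 : ((n : ℤ) + 1).toNat = n + 1 := by omega
  have h2 : ((n : ℤ)).toNat = n := by omega
  rw [h1, h2, Finset.sum_range_succ]

lemma pot_shift (r : ℕ) (m : ℤ) (hm : 0 ≤ m) (t : ℤ) (ht : 0 ≤ t) :
    pot r (t + m * r) = pot r t + pot r (m * r) := by
  obtain ⟨n, rfl⟩ := Int.eq_ofNat_of_zero_le ht
  clear ht
  have hmr : 0 ≤ m * (r : ℤ) := by positivity
  induction n with
  | zero => simp [pot]
  | succ n ih =>
    have e : ((n + 1 : ℕ) : ℤ) + m * r = (n + m * r) + 1 := by push_cast; ring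
    have e2 : ((n + 1 : ℕ) : ℤ) = (n : ℤ) + 1 := by push_cast; ring
    rw [e, pot_succ r _ (by omega), ih, e2, pot_succ r _ (by omega),
      xv_congr r (n + m * r) n m rfl, xv_congr r (n + m * r + 1) (n + 1) m (by ring)]
    ring

lemma sum_pot (r : ℕ) (l : ℤ) (hl : 1 ≤ l) (A : CyclicField r) (n : ℕ) :
    ∑ k ∈ Finset.Icc 1 n, A / (xv r (l + (k : ℕ) - 1) * xv r (l + (k : ℕ)))
      = A * (pot r (l + n) - pot r l) := by
  induction n with
  | zero => simp
  | succ n ih =>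
    rw [Finset.sum_Icc_succ_top (by omega), ih]
    have e : l + ((n + 1 : ℕ) : ℤ) = (l + n) + 1 := by push_cast; ring
    have e2 : (l + n) + 1 - 1 = l + (n : ℤ) := by ring
    rw [e, e2, pot_succ r _ (by omega)]
    ring

lemma Xgcv_eq (r : ℕ) (l : ℤ) (hl : 1 ≤ l) (n e : ℤ) (hn : 0 ≤ n) (he : e = l + n) :
    Xgcv r l n.toNat = xv r e * xv r (l - 1) * (pot r e - pot r (l - 1)) := by
  subst he
  obtain ⟨n, rfl⟩ := Int.eq_ofNat_of_zero_le hn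
  have hp := pot_succ r (l - 1) (by omega)
  rw [sub_add_cancel] at hp
  have h0 := xv_ne r l
  have h1 := xv_ne r (l - 1)
  rw [Int.toNat_natCast]
  cases n with
  | zero =>
    simp only [Xgcv, Nat.cast_zero, add_zero]
    rw [hp]
    field_simp
    ring
  | succ n =>
    simp only [Xgcv]
    rw [sum_pot r l hl]
    have e : l + ((n + 1 : ℕ) : ℤ) = (l + n) + 1 := by push_cast; ring
    rw [e, pot_succ r (l + n) (by omega), hp, xv_congr r (l + r - 1) (l - 1) 1 (by ring)]
    have h2 := xv_ne r (l + n)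
    have h3 := xv_ne r (l + n + 1)
    field_simp
    ring

/-- inductive multiplication formula, case `j ≤ i`, `k + i < r + j`,
`i ≤ l + j ≤ k + i - 1`. -/
theorem stmt4 (r : ℕ) (hr : 1 ≤ r) (i j k l m : ℤ)
    (hj : 1 ≤ j) (hji : j ≤ i) (hi : i ≤ r)
    (hl0 : 0 ≤ l) (hl : l ≤ (r : ℤ) - 1) (hm : 0 ≤ m)
    (hk1 : 1 ≤ k) (hk2 : k ≤ m * r + l)
    (hki : k + i < r + j) (hlj1 : i ≤ l + j) (hlj2 : l + j ≤ k + i - 1) :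
    Xgcv r i k.toNat * Xgcv r j (m * r + l).toNat =
      Xgcv r j (m * r + k + i - j).toNat * Xgcv r i (l + j - i).toNat
        + Xgcv r j (m * r + i - j - 1).toNat
            * Xgcv r (l + j + 1) (k + i - l - j - 1).toNat := by
  have hmr : 0 ≤ m * (r : ℤ) := by positivity
  have hlast : 0 ≤ m * (r : ℤ) + i - j - 1 := by omega
  rw [Xgcv_eq r i (by omega) k (k + i) (by omega) (by ring),
    Xgcv_eq r j (by omega) (m * r + l) ((l + j) + m * r) (by omega) (by ring),
    Xgcv_eq r j (by omega) (m * r + k + i - j) ((k + i) + m * r) (by omega) (by ring),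
    Xgcv_eq r i (by omega) (l + j - i) (l + j) (by omega) (by ring),
    Xgcv_eq r j (by omega) (m * r + i - j - 1) ((i - 1) + m * r) (by omega) (by ring),
    Xgcv_eq r (l + j + 1) (by omega) (k + i - l - j - 1) (k + i) (by omega) (by ring),
    pot_shift r m hm _ (by omega), pot_shift r m hm _ (by omega),
    pot_shift r m hm _ (by omega),
    xv_congr r ((l + j) + m * r) (l + j) m rfl, xv_congr r ((k + i) + m * r) (k + i) m rfl,
    xv_congr r ((i - 1) + m * r) (i - 1) m rfl, add_sub_cancel_right]
  ring
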